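/- arXiv:2208.06929 — 2 statements merged into one kernel-verified Lean document; each statement's English description precedes it below -/
import Mathlib

section
/- Let A be a finite type and τ : ℕ → A a sequence. Suppose M ∈ ℕ is such that for every k ∈ ℕ, the number of words σ : Fin k → A that are infinitely recurring in τ is at most M. Then there exists m with 1 ≤ m ≤ M such that τ is eventually m-periodic, i.e., there is N ∈ ℕ with τ(n + m) = τ(n) for all n ≥ N. -/
/-- `σ` occurs in `τ` at position `i`. -/
def WordOccursAt {A : Type*} (τ : ℕ → A) {k : ℕ} (σ : Fin k → A) (i : ℕ) : Prop :=
  ∀ j : Fin k, τ (i + j) = σ j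

/-- `σ` is infinitely recurring in `τ`. -/
def InfRecurring {A : Type*} (τ : ℕ → A) {k : ℕ} (σ : Fin k → A) : Prop :=
  {i : ℕ | WordOccursAt τ σ i}.Infinite

/-!
This is the Morse–Hedlund argument applied to recurring words. Let `p k` be the number of words
of length `k` infinitely recurring in `τ`. Deleting the last letter maps the recurring words of
length `k + 1` onto those of length `k`, so `p` is nondecreasing. Since `1 ≤ p 0`, the bound
`p n ≤ n` forces `p (k + 1) = p k` for some `k < n`, and there deleting the last letter is
injective. Far out in `τ` every word of length `k + 1` is recurring, so the one at position `i`
determines the one at position `i + 1`. As it takes only `p (k + 1)` values, it is eventually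
periodic with period at most `p (k + 1) ≤ p n`.
-/

open Filter

theorem exists_lt_apply_succ_le {f : ℕ → ℕ} {n : ℕ} (hn : f n < f 0 + n) :
    ∃ k < n, f (k + 1) ≤ f k := by
  induction n with
  | zero => omega
  | succ n ih =>
    by_cases hlt : f n < f 0 + n
    · obtain ⟨k, hk, hle⟩ := ih hlt
      exact ⟨k, by omega, hle⟩
    · exact ⟨n, by omega, by omega⟩

section FiniteOrbit

variable {B : Type*} {w : ℕ → B} {S : Set B} {N : ℕ}

theorem exists_apply_add_eq_of_mem_finite (hS : S.Finite) (hmem : ∀ n ≥ N, w n ∈ S) :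
    ∃ a ≥ N, ∃ m, 1 ≤ m ∧ m ≤ S.ncard ∧ w (a + m) = w a := by
  have hcard : S.ncard < (Set.Icc N (N + S.ncard)).ncard := by
    rw [← Finset.coe_Icc, Set.ncard_coe_finset, Nat.card_Icc]
    omega
  obtain ⟨a, ha, b, hb, hab, heq⟩ := Set.exists_ne_map_eq_of_ncard_lt_of_maps_to hcard
    (fun n hn => hmem n hn.1) hS
  wlog hlt : a < b generalizing a b
  · exact this b hb a ha hab.symm heq.symm (by omega)
  rw [Set.mem_Icc] at ha hb
  refine ⟨a, ha.1, b - a, by omega, by omega, ?_⟩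
  rw [Nat.add_sub_cancel' hlt.le, heq]

theorem exists_eventually_periodic_of_mem_finite (hS : S.Finite) (hmem : ∀ n ≥ N, w n ∈ S)
    (hsucc : ∀ a ≥ N, ∀ b ≥ N, w a = w b → w (a + 1) = w (b + 1)) :
    ∃ m, 1 ≤ m ∧ m ≤ S.ncard ∧ ∃ N', ∀ n ≥ N', w (n + m) = w n := by
  obtain ⟨a, ha, m, hm_pos, hm_le, heq⟩ := exists_apply_add_eq_of_mem_finite hS hmem
  refine ⟨m, hm_pos, hm_le, a, fun n hn => ?_⟩
  induction n, hn using Nat.le_induction with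
  | base => exact heq
  | succ n hn ih =>
    rw [Nat.add_right_comm]
    exact hsucc _ (by omega) _ (by omega) ih

end FiniteOrbit

/-- The word of length `k` read in `τ` from position `i` on; it is the only word of length `k`
that occurs in `τ` at position `i`. -/
def window {A : Type*} (τ : ℕ → A) (k i : ℕ) : Fin k → A :=
  fun j => τ (i + j)

/-- The words of length `k` that are infinitely recurring in `τ`; as a function of `k`, their
number is the complexity function of the Morse–Hedlund argument. -/
def recurringWords {A : Type*} (τ : ℕ → A) (k : ℕ) : Set (Fin k → A) :=
  {σ | InfRecurring τ σ}

section Words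

variable {A : Type*} {τ : ℕ → A} {k : ℕ}

theorem init_window_succ (i : ℕ) : Fin.init (window τ (k + 1) i) = window τ k i :=
  rfl

theorem tail_window_succ (i : ℕ) : Fin.tail (window τ (k + 1) i) = window τ k (i + 1) := by
  funext j
  simp only [Fin.tail, window, Fin.val_succ, Nat.add_assoc, Nat.add_comm 1]

theorem mem_recurringWords_iff_frequently {σ : Fin k → A} :
    σ ∈ recurringWords τ k ↔ ∃ᶠ i in atTop, window τ k i = σ := by
  rw [Nat.frequently_atTop_iff_infinite]
  simp only [recurringWords, InfRecurring, WordOccursAt, window, funext_iff, Set.mem_ofPred_eq]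

theorem finite_range_window (hτ : (Set.range τ).Finite) (k : ℕ) :
    (Set.range (window τ k)).Finite :=
  (Set.Finite.pi' fun _ => hτ).subset <|
    Set.range_subset_iff.2 fun i j => Set.mem_range_self (i + (j : ℕ))

theorem finite_recurringWords (hτ : (Set.range τ).Finite) (k : ℕ) : (recurringWords τ k).Finite :=
  (finite_range_window hτ k).subset fun _ hσ => (mem_recurringWords_iff_frequently.1 hσ).exists

theorem eventually_window_mem_recurringWords (hτ : (Set.range τ).Finite) (k : ℕ) :
    ∀ᶠ i in atTop, window τ k i ∈ recurringWords τ k := by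
  have havoid : ∀ᶠ i in atTop, ∀ σ ∈ Set.range (window τ k),
      σ ∉ recurringWords τ k → window τ k i ≠ σ := by
    refine (eventually_all_finite (finite_range_window hτ k)).2 fun σ _ => ?_
    rw [eventually_imp_distrib_left, mem_recurringWords_iff_frequently, not_frequently]
    exact id
  filter_upwards [havoid] with i hi
  by_contra hnot
  exact hi _ (Set.mem_range_self i) hnot rfl

theorem ncard_recurringWords_pos (hτ : (Set.range τ).Finite) (k : ℕ) :
    0 < (recurringWords τ k).ncard := by
  obtain ⟨i, hi⟩ := (eventually_window_mem_recurringWords hτ k).exists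
  exact (Set.ncard_pos (finite_recurringWords hτ k)).2 ⟨_, hi⟩

theorem recurringWords_subset_image_init (hτ : (Set.range τ).Finite) (k : ℕ) :
    recurringWords τ k ⊆ Fin.init '' recurringWords τ (k + 1) := by
  intro σ hσ
  obtain ⟨i, hi, hrec⟩ := ((mem_recurringWords_iff_frequently.1 hσ).and_eventually
    (eventually_window_mem_recurringWords hτ (k + 1))).exists
  exact ⟨window τ (k + 1) i, hrec, (init_window_succ i).trans hi⟩

theorem ncard_recurringWords_le_ncard_image_init (hτ : (Set.range τ).Finite) (k : ℕ) :
    (recurringWords τ k).ncard ≤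
      ((Fin.init : (Fin (k + 1) → A) → Fin k → A) '' recurringWords τ (k + 1)).ncard :=
  Set.ncard_le_ncard (recurringWords_subset_image_init hτ k)
    ((finite_recurringWords hτ (k + 1)).image _)

theorem monotone_ncard_recurringWords (hτ : (Set.range τ).Finite) :
    Monotone fun k => (recurringWords τ k).ncard :=
  monotone_nat_of_le_succ fun k => (ncard_recurringWords_le_ncard_image_init hτ k).trans
    (Set.ncard_image_le (finite_recurringWords hτ (k + 1)))

theorem injOn_init_recurringWords (hτ : (Set.range τ).Finite)
    (hle : (recurringWords τ (k + 1)).ncard ≤ (recurringWords τ k).ncard) :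
    Set.InjOn (Fin.init : (Fin (k + 1) → A) → Fin k → A) (recurringWords τ (k + 1)) :=
  have hfin := finite_recurringWords hτ (k + 1)
  Set.injOn_of_ncard_image_eq
    ((Set.ncard_image_le hfin).antisymm <|
      hle.trans (ncard_recurringWords_le_ncard_image_init hτ k)) hfin

theorem window_succ_eq_of_injOn_init {S : Set (Fin (k + 1) → A)}
    (hinj : Set.InjOn (Fin.init : (Fin (k + 1) → A) → Fin k → A) S) {a b : ℕ}
    (ha : window τ (k + 1) (a + 1) ∈ S) (hb : window τ (k + 1) (b + 1) ∈ S)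
    (hab : window τ (k + 1) a = window τ (k + 1) b) :
    window τ (k + 1) (a + 1) = window τ (k + 1) (b + 1) := by
  refine hinj ha hb ?_
  rw [init_window_succ, init_window_succ, ← tail_window_succ, ← tail_window_succ, hab]

theorem exists_eventually_periodic_of_ncard_recurringWords_succ_le (hτ : (Set.range τ).Finite)
    (hle : (recurringWords τ (k + 1)).ncard ≤ (recurringWords τ k).ncard) :
    ∃ m, 1 ≤ m ∧ m ≤ (recurringWords τ (k + 1)).ncard ∧ ∃ N, ∀ n ≥ N, τ (n + m) = τ n := by
  have hinj := injOn_init_recurringWords hτ hle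
  obtain ⟨N, hN⟩ := eventually_atTop.1 (eventually_window_mem_recurringWords hτ (k + 1))
  obtain ⟨m, hm_pos, hm_le, N', hper⟩ :=
    exists_eventually_periodic_of_mem_finite (finite_recurringWords hτ (k + 1)) hN
      fun a ha b hb => window_succ_eq_of_injOn_init hinj (hN _ (by omega)) (hN _ (by omega))
  exact ⟨m, hm_pos, hm_le, N', fun n hn => congrFun (hper n hn) 0⟩

end Words

theorem eventually_periodic_of_bounded_recurring_words_general
    {A : Type*} {τ : ℕ → A} (hτ : (Set.range τ).Finite) {n : ℕ}
    (hn : {σ : Fin n → A | InfRecurring τ σ}.ncard ≤ n) :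
    ∃ m : ℕ, 1 ≤ m ∧ m ≤ {σ : Fin n → A | InfRecurring τ σ}.ncard ∧
      ∃ N : ℕ, ∀ i ≥ N, τ (i + m) = τ i := by
  obtain ⟨k, hkn, hle⟩ : ∃ k < n, (recurringWords τ (k + 1)).ncard ≤ (recurringWords τ k).ncard :=
    exists_lt_apply_succ_le (f := fun k => (recurringWords τ k).ncard) <|
      hn.trans_lt (Nat.lt_add_of_pos_left (ncard_recurringWords_pos hτ 0))
  obtain ⟨m, hm_pos, hm_le, hper⟩ :=
    exists_eventually_periodic_of_ncard_recurringWords_succ_le hτ hle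
  exact ⟨m, hm_pos, hm_le.trans (monotone_ncard_recurringWords hτ hkn), hper⟩

/-- If at most `M` words of each length are infinitely recurring in `τ`,
then `τ` is eventually `m`-periodic for some `m` with `1 ≤ m ≤ M`. -/
theorem eventually_periodic_of_bounded_recurring_words
    {A : Type*} [Fintype A] (τ : ℕ → A) (M : ℕ)
    (hM : ∀ k : ℕ, {σ : Fin k → A | InfRecurring τ σ}.ncard ≤ M) :
    ∃ m : ℕ, 1 ≤ m ∧ m ≤ M ∧ ∃ N : ℕ, ∀ n ≥ N, τ (n + m) = τ n := by
  obtain ⟨m, hm_pos, hm_le, hper⟩ :=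
    eventually_periodic_of_bounded_recurring_words_general (Set.toFinite (Set.range τ)) (hM M)
  exact ⟨m, hm_pos, hm_le.trans (hM M), hper⟩
end

section
/- Let A be a finite type and τ : ℕ → A a sequence, and for each k let f_τ(k) be the (finite) number of words σ : Fin k → A that are infinitely recurring in τ. If f_τ(k) = f_τ(k+1) for some k, then every infinitely recurring word σ : Fin k → A has a unique infinitely recurring end extension of length k+1; that is, there is exactly one a ∈ A such that the word sending j < k to σ(j) and k to a is infinitely recurring in τ. -/
/-!
When `τ` takes finitely many values, the pigeonhole principle extends every infinitely recurring
word of length `k` to one of length `k + 1`. Deleting the last letter is therefore a surjection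
from the finite set of infinitely recurring words of length `k + 1` onto that of length `k`; when
the cardinalities agree it is injective, so the extension is unique.
-/

section

variable {A : Type*} {τ : ℕ → A} {k : ℕ}

theorem WordOccursAt.init {ρ : Fin (k + 1) → A} {i : ℕ} (hρ : WordOccursAt τ ρ i) :
    WordOccursAt τ (Fin.init ρ : Fin k → A) i :=
  fun j ↦ hρ j.castSucc

theorem wordOccursAt_snoc_iff {σ : Fin k → A} {a : A} {i : ℕ} :
    WordOccursAt τ (Fin.snoc σ a : Fin (k + 1) → A) i ↔ WordOccursAt τ σ i ∧ τ (i + k) = a := by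
  simp [WordOccursAt, Fin.forall_fin_succ']

namespace InfRecurring

theorem init {ρ : Fin (k + 1) → A} (hρ : InfRecurring τ ρ) :
    InfRecurring τ (Fin.init ρ : Fin k → A) :=
  Set.Infinite.mono (fun _ ↦ WordOccursAt.init) hρ

theorem exists_snoc (hτ : (Set.range τ).Finite) {σ : Fin k → A} (hσ : InfRecurring τ σ) :
    ∃ a, InfRecurring τ (Fin.snoc σ a : Fin (k + 1) → A) := by
  by_contra! not_recurring
  have finite_occurrences :
      (⋃ a ∈ Set.range τ, {i | WordOccursAt τ (Fin.snoc σ a : Fin (k + 1) → A) i}).Finite :=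
    hτ.biUnion fun a _ ↦ Set.not_infinite.mp (not_recurring a)
  refine hσ (finite_occurrences.subset fun i hi ↦ ?_)
  exact Set.mem_biUnion (Set.mem_range_self (i + k)) (wordOccursAt_snoc_iff.mpr ⟨hi, rfl⟩)

theorem finite_setOf (hτ : (Set.range τ).Finite) (k : ℕ) :
    {σ : Fin k → A | InfRecurring τ σ}.Finite := by
  refine (Set.Finite.pi' fun _ ↦ hτ).subset fun σ hσ j ↦ ?_
  obtain ⟨i, hi⟩ := hσ.nonempty
  exact ⟨i + j, hi j⟩

theorem image_init (hτ : (Set.range τ).Finite) (k : ℕ) :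
    Fin.init '' {ρ : Fin (k + 1) → A | InfRecurring τ ρ} =
      {σ : Fin k → A | InfRecurring τ σ} := by
  refine Set.Subset.antisymm (Set.image_subset_iff.mpr fun _ ↦ init) fun σ hσ ↦ ?_
  obtain ⟨a, ha⟩ := exists_snoc hτ hσ
  exact ⟨Fin.snoc σ a, ha, Fin.init_snoc (α := fun _ ↦ A) a σ⟩

theorem injOn_init_of_ncard_eq (hτ : (Set.range τ).Finite)
    (h : {σ : Fin k → A | InfRecurring τ σ}.ncard =
      {ρ : Fin (k + 1) → A | InfRecurring τ ρ}.ncard) :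
    Set.InjOn Fin.init {ρ : Fin (k + 1) → A | InfRecurring τ ρ} :=
  Set.injOn_of_ncard_image_eq (by rw [image_init hτ k, h]) (finite_setOf hτ (k + 1))

end InfRecurring

theorem unique_infRecurring_extension_general (hτ : (Set.range τ).Finite)
    (h : {σ : Fin k → A | InfRecurring τ σ}.ncard =
      {ρ : Fin (k + 1) → A | InfRecurring τ ρ}.ncard)
    {σ : Fin k → A} (hσ : InfRecurring τ σ) :
    ∃! a : A, InfRecurring τ (Fin.snoc σ a : Fin (k + 1) → A) := by
  obtain ⟨a, ha⟩ := hσ.exists_snoc hτ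
  refine ⟨a, ha, fun b hb ↦ ?_⟩
  have snoc_eq : (Fin.snoc σ b : Fin (k + 1) → A) = Fin.snoc σ a :=
    InfRecurring.injOn_init_of_ncard_eq hτ h hb ha (by simp only [Fin.init_snoc])
  exact (Fin.snoc_inj.mp snoc_eq).2

end

/-- If the numbers of infinitely recurring words of lengths `k` and `k+1`
coincide, then every infinitely recurring word of length `k` has a unique
infinitely recurring end extension of length `k+1`. -/
theorem unique_infRecurring_extension
    {A : Type*} [Fintype A] (τ : ℕ → A) (k : ℕ)
    (h : {σ : Fin k → A | InfRecurring τ σ}.ncard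
        = {σ : Fin (k + 1) → A | InfRecurring τ σ}.ncard)
    (σ : Fin k → A) (hσ : InfRecurring τ σ) :
    ∃! a : A, InfRecurring τ (Fin.snoc σ a) :=
  unique_infRecurring_extension_general (Set.toFinite _) h hσ
end
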